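/- Let u be a single positive integer. A word w lies in C(u) if and only if the insertion tableau P = P(w) with rows R_1,...,R_l satisfies: (a) every entry of the first row R_1 is at most u, and (b) for every i ≥ 1, the number of entries of R_i strictly less than u equals the number of entries of R_{i+1} at most u. -/

import Mathlib

namespace Plactic

/-- Insert `x` into a weakly increasing row, returning the new row and the bumped entry. -/
def rowInsert (x : ℕ) : List ℕ → List ℕ × Option ℕ
  | [] => ([x], none)
  | y :: ys =>
    if x < y then (x :: ys, some y)
    else
      let p := rowInsert x ys
      (y :: p.1, p.2)

/-- RSK insertion of `x` into a tableau given as a list of rows. -/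
def tInsert (x : ℕ) : List (List ℕ) → List (List ℕ)
  | [] => [[x]]
  | r :: rs =>
    match rowInsert x r with
    | (r', none) => r' :: rs
    | (r', some y) => r' :: tInsert y rs

/-- The RSK insertion tableau of a word. -/
def P (w : List ℕ) : List (List ℕ) := w.foldl (fun t x => tInsert x t) []

/-- The `i`-th row (0-indexed) of the insertion tableau of `w`. -/
def row (w : List ℕ) (i : ℕ) : List ℕ := (P w).getD i []

/-- The `j`-th column (0-indexed) of a tableau, read top to bottom. -/
def col (T : List (List ℕ)) (j : ℕ) : List ℕ := T.filterMap (fun r => r[j]?)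

/-- An elementary Knuth transposition. -/
inductive KStep : List ℕ → List ℕ → Prop
  | k1 (x y : List ℕ) (a b c : ℕ) : a ≤ b → b < c →
      KStep (x ++ [a, c, b] ++ y) (x ++ [c, a, b] ++ y)
  | k2 (x y : List ℕ) (a b c : ℕ) : a < b → b ≤ c →
      KStep (x ++ [b, a, c] ++ y) (x ++ [b, c, a] ++ y)

/-- Knuth equivalence: the equivalence relation generated by Knuth transpositions. -/
def KEquiv : List ℕ → List ℕ → Prop := Relation.EqvGen KStep

/-- The centralizer of `u` in the plactic monoid. -/
def Cent (u : List ℕ) : Set (List ℕ) := {w | KEquiv (u ++ w) (w ++ u)}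

end Plactic

/-!
When `#R_i(<u) = #R_{i+1}(≤u)`, a letter `u` standing in its sorted place in `R_{i+1}` can be moved
by Knuth transpositions to its sorted place in `R_i`. Under (b) the product `u · T` of a letter and
a tableau is therefore `T` with `u` inserted into its top row, and under (a) this is `T · u`.

Conversely, let `u` commute with `T`. The top row of `u · T` contains `R_1` as a subword, so
inserting `u` into `R_1` bumps nothing, which is (a). For (b) discard the letters greater than `u`.
At the lowest failure of (b) the row `R_{i+1}` has room for one more `u` below `R_i`, so that
`u · T` has a longer row `i + 1` than `T`, whereas `T · u` differs from `T` in the top row only.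
-/

namespace Plactic

/-! ### Sorted lists -/

section Sorted

variable {α : Type*} [LinearOrder α]

theorem filter_append_filter_not_of_isLowerSet {p : α → Prop} [DecidablePred p]
    (hp : IsLowerSet {x | p x}) {l : List α} (hl : l.Pairwise (· ≤ ·)) :
    l.filter (p ·) ++ l.filter (!p ·) = l := by
  refine (List.filter_append_perm (p ·) l).eq_of_pairwise' (r := (· ≤ ·)) ?_ hl
  refine List.pairwise_append.2 ⟨hl.filter _, hl.filter _, fun x hx y hy => ?_⟩
  have hpx : p x := by simpa using (List.mem_filter.1 hx).2
  have hpy : ¬ p y := by simpa using (List.mem_filter.1 hy).2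
  exact (lt_of_not_ge fun hyx => hpy (hp hyx hpx)).le

theorem pairwise_append_cons_of_le {u : α} {L B : List α} (h : (L ++ B).Pairwise (· ≤ ·))
    (hL : ∀ x ∈ L, x ≤ u) (hB : ∀ x ∈ B, u ≤ x) : (L ++ u :: B).Pairwise (· ≤ ·) := by
  simp only [List.pairwise_append, List.pairwise_cons, List.mem_cons] at h ⊢
  refine ⟨h.1, ⟨hB, h.2.1⟩, ?_⟩
  rintro x hx y (rfl | hy)
  exacts [hL x hx, h.2.2 x hx y hy]

theorem orderedInsert_append {u : α} {L B : List α} (h : (L ++ u :: B).Pairwise (· ≤ ·)) :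
    (L ++ B).orderedInsert (· ≤ ·) u = L ++ u :: B :=
  ((List.perm_orderedInsert _ u _).trans List.perm_middle.symm).eq_of_pairwise'
    ((h.sublist ((List.sublist_cons_self u B).append_left L)).orderedInsert u _) h

theorem orderedInsert_eq_append_singleton {u : α} {l : List α} (hl : l.Pairwise (· ≤ ·))
    (hu : ∀ x ∈ l, x ≤ u) : l.orderedInsert (· ≤ ·) u = l ++ [u] := by
  simpa using orderedInsert_append (pairwise_append_cons_of_le (B := []) (by simpa using hl) hu
    (by simp))

end Sorted

/-! ### Knuth equivalence -/

namespace KEquiv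

@[refl]
theorem refl (v : List ℕ) : KEquiv v v := Relation.EqvGen.refl v

@[symm]
theorem symm {v w : List ℕ} (h : KEquiv v w) : KEquiv w v := Relation.EqvGen.symm _ _ h

@[trans]
theorem trans {v w z : List ℕ} (h : KEquiv v w) (h' : KEquiv w z) : KEquiv v z :=
  Relation.EqvGen.trans _ _ _ h h'

instance : Trans KEquiv KEquiv KEquiv := ⟨trans⟩

theorem append_context {v w : List ℕ} (h : KEquiv v w) (x y : List ℕ) :
    KEquiv (x ++ v ++ y) (x ++ w ++ y) := by
  induction h with
  | rel v w h =>
    refine Relation.EqvGen.rel _ _ ?_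
    cases h with
    | k1 x' y' a b c h1 h2 => simpa using KStep.k1 (x ++ x') (y' ++ y) a b c h1 h2
    | k2 x' y' a b c h1 h2 => simpa using KStep.k2 (x ++ x') (y' ++ y) a b c h1 h2
  | refl v => rfl
  | symm v w _ ih => exact ih.symm
  | trans v w z _ _ ih1 ih2 => exact ih1.trans ih2

theorem append_left {v w : List ℕ} (h : KEquiv v w) (x : List ℕ) : KEquiv (x ++ v) (x ++ w) := by
  simpa using h.append_context x []

theorem append_right {v w : List ℕ} (h : KEquiv v w) (y : List ℕ) : KEquiv (v ++ y) (w ++ y) := by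
  simpa using h.append_context [] y

theorem cons {v w : List ℕ} (h : KEquiv v w) (x : ℕ) : KEquiv (x :: v) (x :: w) :=
  h.append_left [x]

theorem swap_left {a b c : ℕ} (hab : a ≤ b) (hbc : b < c) (v : List ℕ) :
    KEquiv (a :: c :: b :: v) (c :: a :: b :: v) :=
  Relation.EqvGen.rel _ _ (KStep.k1 [] v a b c hab hbc)

theorem swap_right {a b c : ℕ} (hab : a < b) (hbc : b ≤ c) (v : List ℕ) :
    KEquiv (b :: a :: c :: v) (b :: c :: a :: v) :=
  Relation.EqvGen.rel _ _ (KStep.k2 [] v a b c hab hbc)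

theorem filter {p : ℕ → Prop} [DecidablePred p] (hp : {x | p x}.OrdConnected) {v w : List ℕ}
    (h : KEquiv v w) : KEquiv (v.filter (p ·)) (w.filter (p ·)) := by
  induction h with
  | rel v w h =>
    cases h with
    | k1 x y a b c hab hbc =>
      simp only [List.filter_append]
      refine append_context ?_ _ _
      by_cases hac : p a ∧ p c
      · have hb : p b := hp.out hac.1 hac.2 ⟨hab, hbc.le⟩
        simpa [hac, hb] using swap_left hab hbc []
      · by_cases ha : p a <;> simp_all [List.filter_cons, KEquiv.refl]
    | k2 x y a b c hab hbc =>
      simp only [List.filter_append]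
      refine append_context ?_ _ _
      by_cases hac : p a ∧ p c
      · have hb : p b := hp.out hac.1 hac.2 ⟨hab.le, hbc⟩
        simpa [hac, hb] using swap_right hab hbc []
      · by_cases ha : p a <;> simp_all [List.filter_cons, KEquiv.refl]
  | refl v => rfl
  | symm v w _ ih => exact ih.symm
  | trans v w z _ _ ih1 ih2 => exact ih1.trans ih2

theorem cons_append_singleton {l x : ℕ} {R : List ℕ} (hx : x < l)
    (hR : (l :: R).Pairwise (· ≤ ·)) : KEquiv (l :: (R ++ [x])) (l :: x :: R) := by
  induction R generalizing l with
  | nil => rfl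
  | cons r R ih =>
    have hlr : l ≤ r := List.rel_of_pairwise_cons hR List.mem_cons_self
    exact ((ih (hx.trans_le hlr) hR.of_cons).cons l).trans (swap_right hx hlr R).symm

theorem swap_cons {z y x : ℕ} {R : List ℕ} (hR : (z :: R).Pairwise (· ≤ ·)) (hx : x ∈ R)
    (hxy : x < y) : KEquiv (z :: y :: R) (y :: z :: R) := by
  cases R with
  | nil => simp at hx
  | cons k R =>
    have hkx : k ≤ x := by
      rcases List.mem_cons.1 hx with rfl | hx
      exacts [le_rfl, List.rel_of_pairwise_cons hR.of_cons hx]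
    exact swap_left (List.rel_of_pairwise_cons hR List.mem_cons_self) (hkx.trans_lt hxy) R

end KEquiv

/-! ### Row insertion -/

theorem rowInsert_cons_of_lt {x y : ℕ} (h : x < y) (R : List ℕ) :
    rowInsert x (y :: R) = (x :: R, some y) := by
  simp [rowInsert, h]

theorem rowInsert_cons_of_le {x y : ℕ} (h : y ≤ x) (R : List ℕ) :
    rowInsert x (y :: R) = (y :: (rowInsert x R).1, (rowInsert x R).2) := by
  simp [rowInsert, not_lt.2 h]

theorem mem_rowInsert_self (x : ℕ) (R : List ℕ) : x ∈ (rowInsert x R).1 := by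
  induction R with
  | nil => simp [rowInsert]
  | cons y R ih =>
    rcases lt_or_ge x y with h | h <;>
      simp [rowInsert_cons_of_lt, rowInsert_cons_of_le, h, ih]

theorem eq_or_mem_of_mem_rowInsert {x z : ℕ} {R : List ℕ} (h : z ∈ (rowInsert x R).1) :
    z = x ∨ z ∈ R := by
  induction R with
  | nil => simpa [rowInsert] using h
  | cons y R ih =>
    rcases lt_or_ge x y with hxy | hxy
    · rw [rowInsert_cons_of_lt hxy, List.mem_cons] at h
      exact h.imp_right (List.mem_cons_of_mem y)
    · rw [rowInsert_cons_of_le hxy, List.mem_cons] at h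
      rcases h with rfl | h
      exacts [Or.inr List.mem_cons_self, (ih h).imp_right (List.mem_cons_of_mem y)]

theorem mem_and_lt_of_rowInsert_eq_some {x y : ℕ} {R : List ℕ} (h : (rowInsert x R).2 = some y) :
    y ∈ R ∧ x < y := by
  induction R with
  | nil => simp [rowInsert] at h
  | cons z R ih =>
    rcases lt_or_ge x z with hxz | hxz
    · obtain rfl : z = y := by simpa [rowInsert_cons_of_lt hxz] using h
      exact ⟨List.mem_cons_self, hxz⟩
    · rw [rowInsert_cons_of_le hxz] at h
      exact (ih h).imp_left (List.mem_cons_of_mem z)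

theorem pairwise_rowInsert {R : List ℕ} (hR : R.Pairwise (· ≤ ·)) (x : ℕ) :
    (rowInsert x R).1.Pairwise (· ≤ ·) := by
  induction R with
  | nil => simp [rowInsert]
  | cons y R ih =>
    rw [List.pairwise_cons] at hR
    rcases lt_or_ge x y with hxy | hxy
    · rw [rowInsert_cons_of_lt hxy]
      exact List.pairwise_cons.2 ⟨fun z hz => hxy.le.trans (hR.1 z hz), hR.2⟩
    · rw [rowInsert_cons_of_le hxy]
      refine List.pairwise_cons.2 ⟨fun z hz => ?_, ih hR.2⟩
      rcases eq_or_mem_of_mem_rowInsert hz with rfl | hz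
      exacts [hxy, hR.1 z hz]

theorem exists_rowInsert_eq_some {x y : ℕ} {R : List ℕ} (hR : R.Pairwise (· ≤ ·)) (hy : y ∈ R)
    (hxy : x < y) : ∃ e ≤ y, (rowInsert x R).2 = some e := by
  induction R with
  | nil => simp at hy
  | cons z R ih =>
    rw [List.pairwise_cons] at hR
    rcases lt_or_ge x z with hxz | hxz
    · refine ⟨z, ?_, by rw [rowInsert_cons_of_lt hxz]⟩
      rcases List.mem_cons.1 hy with rfl | hy
      exacts [le_rfl, hR.1 y hy]
    · rw [rowInsert_cons_of_le hxz]
      exact ih hR.2 (List.mem_of_ne_of_mem (hxz.trans_lt hxy).ne' hy)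

theorem exists_rowInsert_eq_some_of_le {b c e : ℕ} {R : List ℕ} (hR : R.Pairwise (· ≤ ·))
    (hbc : b ≤ c) (h : (rowInsert c (rowInsert b R).1).2 = some e) :
    ∃ d ≤ e, (rowInsert b R).2 = some d := by
  obtain ⟨he, hce⟩ := mem_and_lt_of_rowInsert_eq_some h
  rcases eq_or_mem_of_mem_rowInsert he with rfl | he
  · exact absurd hce (not_lt.2 hbc)
  · exact exists_rowInsert_eq_some hR he (hbc.trans_lt hce)

theorem le_of_sublist_rowInsert {u : ℕ} {R : List ℕ} (h : R.Sublist (rowInsert u R).1) :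
    ∀ x ∈ R, x ≤ u := by
  induction R with
  | nil => simp
  | cons r R ih =>
    rcases lt_or_ge u r with hur | hru
    · rw [rowInsert_cons_of_lt hur] at h
      have hr : r = u := List.head_eq_of_cons_eq (h.eq_of_length rfl)
      exact absurd hr hur.ne'
    · rw [rowInsert_cons_of_le hru, List.cons_sublist_cons] at h
      exact List.forall_mem_cons.2 ⟨hru, ih h⟩

theorem kEquiv_rowInsert {R : List ℕ} (hR : R.Pairwise (· ≤ ·)) (x : ℕ) :
    KEquiv (R ++ [x]) ((rowInsert x R).2.toList ++ (rowInsert x R).1) := by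
  induction R with
  | nil => rfl
  | cons z R ih =>
    rcases lt_or_ge x z with hxz | hxz
    · simpa [rowInsert_cons_of_lt hxz] using KEquiv.cons_append_singleton hxz hR
    · have hrow := pairwise_rowInsert hR x
      have ih := (ih hR.of_cons).cons z
      rw [rowInsert_cons_of_le hxz] at hrow ⊢
      cases hy : (rowInsert x R).2 with
      | none => simpa [hy] using ih
      | some y =>
        rw [hy] at ih
        exact ih.trans
          (KEquiv.swap_cons hrow (mem_rowInsert_self x R) (mem_and_lt_of_rowInsert_eq_some hy).2)

/-- Successive insertion of the letters of a word into a row. The second component is the word of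
the bumped letters, in the order in which they leave the row. -/
def rowInsertWord : List ℕ → List ℕ → List ℕ × List ℕ
  | R, [] => (R, [])
  | R, x :: v => ((rowInsertWord (rowInsert x R).1 v).1,
      (rowInsert x R).2.toList ++ (rowInsertWord (rowInsert x R).1 v).2)

theorem rowInsertWord_append (R v w : List ℕ) : rowInsertWord R (v ++ w) =
    ((rowInsertWord (rowInsertWord R v).1 w).1,
      (rowInsertWord R v).2 ++ (rowInsertWord (rowInsertWord R v).1 w).2) := by
  induction v generalizing R with
  | nil => rfl
  | cons x v ih => simp [rowInsertWord, ih]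

theorem pairwise_rowInsertWord {R : List ℕ} (hR : R.Pairwise (· ≤ ·)) (v : List ℕ) :
    (rowInsertWord R v).1.Pairwise (· ≤ ·) := by
  induction v generalizing R with
  | nil => exact hR
  | cons x _ ih => exact ih (pairwise_rowInsert hR x)

theorem rowInsertWord_cons_of_le {y : ℕ} {v : List ℕ} (h : ∀ x ∈ v, y ≤ x) (R : List ℕ) :
    rowInsertWord (y :: R) v = (y :: (rowInsertWord R v).1, (rowInsertWord R v).2) := by
  induction v generalizing R with
  | nil => rfl
  | cons x v ih =>
    rw [List.forall_mem_cons] at h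
    simp [rowInsertWord, rowInsert_cons_of_le h.1, ih h.2]

theorem rowInsertWord_cons_cons_of_lt {x y : ℕ} {v : List ℕ} (hxy : x < y) (hv : ∀ z ∈ v, x ≤ z)
    (R : List ℕ) : rowInsertWord (y :: R) (x :: v) =
      (x :: (rowInsertWord R v).1, y :: (rowInsertWord R v).2) := by
  simp [rowInsertWord, rowInsert_cons_of_lt hxy, rowInsertWord_cons_of_le hv]

theorem rowInsertWord_nil {v : List ℕ} (hv : v.Pairwise (· ≤ ·)) :
    rowInsertWord [] v = (v, []) := by
  induction v with
  | nil => rfl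
  | cons x v ih =>
    rw [List.pairwise_cons] at hv
    simp [rowInsertWord, rowInsert, rowInsertWord_cons_of_le hv.1, ih hv.2]

theorem sublist_rowInsertWord {v : List ℕ} (hv : v.Pairwise (· ≤ ·)) (R : List ℕ) :
    v.Sublist (rowInsertWord R v).1 := by
  induction R generalizing v with
  | nil => rw [rowInsertWord_nil hv]
  | cons y R ih =>
    cases v with
    | nil => exact List.nil_sublist _
    | cons x v =>
      have hxv := List.pairwise_cons.1 hv
      rcases lt_or_ge x y with hxy | hyx
      · rw [rowInsertWord_cons_cons_of_lt hxy hxv.1]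
        exact (ih hxv.2).cons_cons x
      · have hyv : ∀ z ∈ x :: v, y ≤ z :=
          List.forall_mem_cons.2 ⟨hyx, fun z hz => hyx.trans (hxv.1 z hz)⟩
        rw [rowInsertWord_cons_of_le hyv]
        exact (ih hv).cons y

/-! ### Knuth invariance of insertion -/

/-- Inserting the words `v` and `w` into the row `R` yields the same row and Knuth equivalent words
of bumped letters. This is the one-row form of the Knuth invariance of the insertion tableau. -/
def SameInsert (R v w : List ℕ) : Prop :=
  (rowInsertWord R v).1 = (rowInsertWord R w).1 ∧
    KEquiv (rowInsertWord R v).2 (rowInsertWord R w).2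

theorem SameInsert.cons {y : ℕ} {R v w : List ℕ} (h : SameInsert R v w) (hv : ∀ x ∈ v, y ≤ x)
    (hw : ∀ x ∈ w, y ≤ x) : SameInsert (y :: R) v w := by
  simpa [SameInsert, rowInsertWord_cons_of_le hv, rowInsertWord_cons_of_le hw] using h

theorem SameInsert.append_context {R x v w : List ℕ}
    (h : SameInsert (rowInsertWord R x).1 v w) (y : List ℕ) :
    SameInsert R (x ++ v ++ y) (x ++ w ++ y) := by
  obtain ⟨hrow, hbump⟩ := h
  simp only [SameInsert, rowInsertWord_append, hrow, true_and]
  exact hbump.append_context _ _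

theorem sameInsert_swap_left {R : List ℕ} {a b c : ℕ} (hR : R.Pairwise (· ≤ ·)) (hab : a ≤ b)
    (hbc : b < c) : SameInsert R [a, c, b] [c, a, b] := by
  have hac : a < c := hab.trans_lt hbc
  induction R with
  | nil =>
    simp [SameInsert, rowInsertWord, rowInsert, hab.not_gt, hbc, hac.not_gt, hac, KEquiv.refl]
  | cons y R ih =>
    rcases lt_or_ge a y with hay | hya
    · rcases lt_or_ge c y with hcy | hyc
      · cases R with
        | nil =>
          simp [SameInsert, rowInsertWord, rowInsert, hay, hcy, hab.not_gt, hbc, hac.not_gt, hac,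
            KEquiv.refl]
        | cons z R =>
          have hyz : y ≤ z := List.rel_of_pairwise_cons hR List.mem_cons_self
          have hcz : c < z := hcy.trans_le hyz
          simpa [SameInsert, rowInsertWord, rowInsert, hay, hcy, hab.not_gt, hbc, hac.not_gt, hac,
            hcz, hbc.trans hcz] using (KEquiv.swap_right hcy hyz []).symm
      · obtain ⟨e, hec, he⟩ :=
          exists_rowInsert_eq_some (pairwise_rowInsert hR.of_cons c) (mem_rowInsert_self c R) hbc
        have hye : y ≤ e := by
          rcases eq_or_mem_of_mem_rowInsert (mem_and_lt_of_rowInsert_eq_some he).1 with rfl | he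
          exacts [hyc, List.rel_of_pairwise_cons hR he]
        simp only [SameInsert, rowInsertWord, rowInsert_cons_of_lt hay, rowInsert_cons_of_le hac.le,
          rowInsert_cons_of_le hab, rowInsert_cons_of_le hyc, he, true_and]
        cases hd : (rowInsert c R).2 with
        | none => rfl
        | some d =>
          exact KEquiv.swap_left hye (hec.trans_lt (mem_and_lt_of_rowInsert_eq_some hd).2) []
    · refine (ih hR.of_cons).cons ?_ ?_ <;> simp [hya, hya.trans hab, hya.trans hac.le]

theorem sameInsert_swap_right {R : List ℕ} {a b c : ℕ} (hR : R.Pairwise (· ≤ ·)) (hab : a < b)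
    (hbc : b ≤ c) : SameInsert R [b, a, c] [b, c, a] := by
  have hac : a < c := hab.trans_le hbc
  induction R with
  | nil => simp [SameInsert, rowInsertWord, rowInsert, hab, hbc.not_gt, hac.not_gt, KEquiv.refl]
  | cons y R ih =>
    rcases lt_or_ge a y with hay | hya
    · rcases lt_or_ge b y with hby | hyb
      · simp only [SameInsert, rowInsertWord, rowInsert_cons_of_lt hby, rowInsert_cons_of_lt hab,
          rowInsert_cons_of_le hac.le, rowInsert_cons_of_le hbc, true_and]
        cases hd : (rowInsert c R).2 with
        | none => rfl
        | some d =>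
          have hyd : y ≤ d := List.rel_of_pairwise_cons hR (mem_and_lt_of_rowInsert_eq_some hd).1
          exact KEquiv.swap_right hby hyd []
      · simp only [SameInsert, rowInsertWord, rowInsert_cons_of_lt hay, rowInsert_cons_of_le hyb,
          rowInsert_cons_of_le (hyb.trans hbc), rowInsert_cons_of_le hac.le, true_and]
        cases he : (rowInsert c (rowInsert b R).1).2 with
        | none => simpa using KEquiv.refl _
        | some e =>
          obtain ⟨d, hde, hd⟩ := exists_rowInsert_eq_some_of_le hR.of_cons hbc he
          have hyd : y < d := hyb.trans_lt (mem_and_lt_of_rowInsert_eq_some hd).2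
          simpa [hd] using KEquiv.swap_right hyd hde []
    · refine (ih hR.of_cons).cons ?_ ?_ <;> simp [hya, hya.trans hab.le, hya.trans hac.le]

theorem KEquiv.sameInsert_nil {v w : List ℕ} (h : KEquiv v w) : SameInsert [] v w := by
  induction h with
  | rel v w h =>
    cases h with
    | k1 x y a b c hab hbc =>
      exact (sameInsert_swap_left (pairwise_rowInsertWord .nil x) hab hbc).append_context y
    | k2 x y a b c hab hbc =>
      exact (sameInsert_swap_right (pairwise_rowInsertWord .nil x) hab hbc).append_context y
  | refl v => exact ⟨rfl, refl _⟩
  | symm v w _ ih => exact ⟨ih.1.symm, ih.2.symm⟩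
  | trans v w z _ _ ih1 ih2 => exact ⟨ih1.1.trans ih2.1, ih1.2.trans ih2.2⟩

theorem tInsert_cons (x : ℕ) (R : List ℕ) (T : List (List ℕ)) :
    tInsert x (R :: T) = (rowInsert x R).1 :: (rowInsert x R).2.elim T (tInsert · T) := by
  rw [tInsert]
  split <;> rename_i hx <;> simp [hx]

theorem foldl_tInsert_cons (R : List ℕ) (T : List (List ℕ)) (v : List ℕ) :
    v.foldl (fun t x => tInsert x t) (R :: T) =
      (rowInsertWord R v).1 :: (rowInsertWord R v).2.foldl (fun t x => tInsert x t) T := by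
  induction v generalizing R T with
  | nil => rfl
  | cons x v ih =>
    rw [List.foldl_cons, tInsert_cons, ih, rowInsertWord, List.foldl_append]
    cases (rowInsert x R).2 <;> rfl

theorem P_cons (x : ℕ) (v : List ℕ) :
    P (x :: v) = (rowInsertWord [] (x :: v)).1 :: P (rowInsertWord [] (x :: v)).2 :=
  foldl_tInsert_cons [x] [] v

theorem P_append_singleton (w : List ℕ) (x : ℕ) : P (w ++ [x]) = tInsert x (P w) := by
  simp [P]

theorem row_zero (v : List ℕ) : row v 0 = (rowInsertWord [] v).1 := by
  cases v with
  | nil => rfl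
  | cons x v => rw [row, P_cons, List.getD_cons_zero]

theorem row_succ (v : List ℕ) (i : ℕ) : row v (i + 1) = row (rowInsertWord [] v).2 i := by
  cases v with
  | nil => rfl
  | cons x v => rw [row, P_cons, List.getD_cons_succ, row]

theorem KEquiv.row_eq {v w : List ℕ} (h : KEquiv v w) (i : ℕ) : row v i = row w i := by
  induction i generalizing v w with
  | zero => simpa [row_zero] using h.sameInsert_nil.1
  | succ i ih => simpa [row_succ] using ih h.sameInsert_nil.2

/-! ### Semistandard tableaux -/

/-- The row `X` may stand directly below the row `Y` in a semistandard tableau: it is at most as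
long, and each of its entries is greater than the entry of `Y` above it. -/
inductive Below : List ℕ → List ℕ → Prop
  | nil (Y : List ℕ) : Below [] Y
  | cons {x y : ℕ} {X Y : List ℕ} (hyx : y < x) (h : Below X Y) : Below (x :: X) (y :: Y)

namespace Below

theorem append_right {X Y : List ℕ} (h : Below X Y) (Z : List ℕ) : Below X (Y ++ Z) := by
  induction h with
  | nil Y => exact .nil _
  | cons hyx _ ih => exact .cons hyx ih

theorem forall₂_and_of_append {L B A C : List ℕ} (h : Below (L ++ B) (A ++ C))
    (hlen : L.length = A.length) : L.Forall₂ (· > ·) A ∧ Below B C := by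
  induction L generalizing A with
  | nil =>
    obtain rfl : A = [] := List.length_eq_zero_iff.1 hlen.symm
    exact ⟨.nil, h⟩
  | cons l L ih =>
    cases A with
    | nil => simp at hlen
    | cons a A =>
      cases h with
      | cons hal h => exact (ih h (Nat.succ.inj hlen)).imp_left (.cons hal)

theorem filter {p : ℕ → Prop} [DecidablePred p] (hp : IsLowerSet {x | p x}) {X Y : List ℕ}
    (h : Below X Y) (hX : X.Pairwise (· ≤ ·)) : Below (X.filter (p ·)) (Y.filter (p ·)) := by
  induction h with
  | nil Y => exact .nil _
  | @cons x y X Y hyx _ ih =>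
    by_cases hx : p x
    · have hy : p y := hp hyx.le hx
      simpa [hx, hy] using (ih hX.of_cons).cons hyx
    · have hnil : (x :: X).filter (p ·) = [] := by
        simp only [List.filter_eq_nil_iff, decide_eq_true_eq, List.forall_mem_cons]
        exact ⟨hx, fun z hz hpz => hx (hp (List.rel_of_pairwise_cons hX hz) hpz)⟩
      rw [hnil]
      exact .nil _

theorem length_le_countP_lt {X Y : List ℕ} {u : ℕ} (h : Below X Y) (hX : ∀ x ∈ X, x ≤ u) :
    X.length ≤ Y.countP (· < u) := by
  induction h with
  | nil Y => simp
  | cons hyx _ ih =>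
    rw [List.forall_mem_cons] at hX
    simpa [hyx.trans_le hX.1] using ih hX.2

theorem append_singleton {X Y : List ℕ} {u : ℕ} (h : Below X Y) (hY : Y.Pairwise (· ≤ ·))
    (hlen : X.length < Y.countP (· < u)) : Below (X ++ [u]) Y := by
  induction h with
  | nil Y =>
    obtain ⟨y, hy, hyu⟩ := List.countP_pos_iff.1 hlen
    rw [decide_eq_true_eq] at hyu
    cases Y with
    | nil => simp at hy
    | cons y₀ Y =>
      have hy₀ : y₀ ≤ y := by
        rcases List.mem_cons.1 hy with rfl | hy
        exacts [le_rfl, List.rel_of_pairwise_cons hY hy]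
      exact .cons (hy₀.trans_lt hyu) (.nil Y)
  | cons hyx _ ih =>
    refine .cons hyx (ih hY.of_cons ?_)
    rw [List.countP_cons, List.length_cons] at hlen
    split at hlen <;> lia

theorem rowInsert {X R : List ℕ} (h : Below X R) (x : ℕ) : Below X (rowInsert x R).1 := by
  induction h with
  | nil R => exact .nil _
  | @cons z r X R hrz h ih =>
    rcases lt_or_ge x r with hxr | hrx
    · rw [rowInsert_cons_of_lt hxr]
      exact h.cons (hxr.trans hrz)
    · rw [rowInsert_cons_of_le hrx]
      exact ih.cons hrz

theorem rowInsert_of_eq_some {S R : List ℕ} {x y : ℕ} (h : Below S R)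
    (hy : (Plactic.rowInsert x R).2 = some y) :
    Below (Plactic.rowInsert y S).1 (Plactic.rowInsert x R).1 := by
  have hxy := (mem_and_lt_of_rowInsert_eq_some hy).2
  induction R generalizing S with
  | nil => simp [Plactic.rowInsert] at hy
  | cons r R ih =>
    rcases lt_or_ge x r with hxr | hrx
    · rw [rowInsert_cons_of_lt hxr] at hy ⊢
      obtain rfl : r = y := Option.some.inj hy
      cases h with
      | nil => exact .cons hxr (.nil _)
      | cons hrs h =>
        rw [rowInsert_cons_of_lt hrs]
        exact h.cons hxr
    · rw [rowInsert_cons_of_le hrx] at hy ⊢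
      cases h with
      | nil => exact .cons (hrx.trans_lt hxy) (.nil _)
      | @cons s _ S _ hrs h =>
        rcases lt_or_ge y s with hys | hsy
        · rw [rowInsert_cons_of_lt hys]
          exact (h.rowInsert x).cons (hrx.trans_lt hxy)
        · rw [rowInsert_cons_of_le hsy]
          exact (ih h hy).cons hrs

theorem rowInsertWord_eq {X R : List ℕ} (h : Below X R) (hR : R.Pairwise (· ≤ ·)) :
    rowInsertWord X R = (R, X) := by
  induction h with
  | nil R => exact rowInsertWord_nil hR
  | cons hrx _ ih =>
    rw [rowInsertWord_cons_cons_of_lt hrx (List.pairwise_cons.1 hR).1, ih hR.of_cons]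

end Below

/-- A semistandard tableau, given by its rows from top to bottom. Rows at the bottom may be empty,
so that restricting every row to a lower set of letters gives a tableau again. -/
def IsTableau : List (List ℕ) → Prop
  | [] => True
  | R :: T => R.Pairwise (· ≤ ·) ∧ Below (T.headD []) R ∧ IsTableau T

/-- The row reading word of a tableau, from the bottom row to the top row. -/
def reading : List (List ℕ) → List ℕ
  | [] => []
  | R :: T => reading T ++ R

theorem reading_append (T T' : List (List ℕ)) : reading (T ++ T') = reading T' ++ reading T := by
  induction T with
  | nil => simp [reading]
  | cons R T ih => simp [reading, ih]

theorem reading_tail_append_headD (T : List (List ℕ)) :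
    reading T.tail ++ T.headD [] = reading T := by
  cases T <;> rfl

theorem filter_reading (p : ℕ → Bool) (T : List (List ℕ)) :
    (reading T).filter p = reading (T.map (List.filter p)) := by
  induction T with
  | nil => rfl
  | cons R T ih => simp [reading, ih]

namespace IsTableau

variable {T : List (List ℕ)}

theorem pairwise_headD (h : IsTableau T) : (T.headD []).Pairwise (· ≤ ·) := by
  cases T with
  | nil => exact .nil
  | cons R T => exact h.1

theorem of_append {T' : List (List ℕ)} (h : IsTableau (T ++ T')) : IsTableau T' := by
  induction T with
  | nil => exact h
  | cons R T ih => exact ih h.2.2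

theorem append_cons_congr {R : List ℕ} {S S' : List (List ℕ)} (h : IsTableau (T ++ R :: S))
    (h' : IsTableau (R :: S')) : IsTableau (T ++ R :: S') := by
  induction T with
  | nil => exact h'
  | cons A T ih =>
    refine ⟨h.1, ?_, ih h.2.2⟩
    cases T <;> exact h.2.1

theorem cons_tail {R : List ℕ} (h : IsTableau T) (hR : R.Pairwise (· ≤ ·))
    (hle : ∀ X, Below X (T.headD []) → Below X R) : IsTableau (R :: T.tail) := by
  cases T with
  | nil => exact ⟨hR, .nil R, trivial⟩
  | cons A T => exact ⟨hR, hle _ h.2.1, h.2.2⟩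

theorem append_singleton_cons_tail {u : ℕ} (h : IsTableau T) (hu : ∀ x ∈ T.headD [], x ≤ u) :
    IsTableau ((T.headD [] ++ [u]) :: T.tail) :=
  h.cons_tail (pairwise_append_cons_of_le (B := []) (by simpa using h.pairwise_headD) hu (by simp))
    fun _ hX => hX.append_right [u]

theorem map_filter {p : ℕ → Prop} [DecidablePred p] (hp : IsLowerSet {x | p x})
    (h : IsTableau T) : IsTableau (T.map (List.filter (p ·))) := by
  induction T with
  | nil => trivial
  | cons R T ih =>
    have hhead : (T.map (List.filter (p ·))).headD [] = (T.headD []).filter (p ·) := by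
      cases T <;> rfl
    exact ⟨h.1.filter _, hhead ▸ h.2.1.filter hp h.2.2.pairwise_headD, ih h.2.2⟩

theorem tInsert (h : IsTableau T) (x : ℕ) : IsTableau (tInsert x T) := by
  induction T generalizing x with
  | nil => exact ⟨List.pairwise_singleton _ x, .nil _, trivial⟩
  | cons R T ih =>
    obtain ⟨hR, hTR, hT⟩ := h
    rw [tInsert_cons]
    refine ⟨pairwise_rowInsert hR x, ?_⟩
    cases hy : (rowInsert x R).2 with
    | none => exact ⟨hTR.rowInsert x, hT⟩
    | some y =>
      have hhead : (Plactic.tInsert y T).headD [] = (rowInsert y (T.headD [])).1 := by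
        cases T with
        | nil => rfl
        | cons A T => rw [tInsert_cons, List.headD_cons, List.headD_cons]
      exact ⟨hhead ▸ hTR.rowInsert_of_eq_some hy, ih hT y⟩

theorem kEquiv_reading_tInsert (h : IsTableau T) (x : ℕ) :
    KEquiv (reading T ++ [x]) (reading (Plactic.tInsert x T)) := by
  induction T generalizing x with
  | nil => rfl
  | cons R T ih =>
    have hrow := (kEquiv_rowInsert h.1 x).append_left (reading T)
    rw [tInsert_cons, reading, reading, List.append_assoc]
    refine hrow.trans ?_
    cases (rowInsert x R).2 with
    | none => rfl
    | some y => simpa using (ih h.2.2 y).append_right (rowInsert x R).1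

theorem rowInsertWord_reading (h : IsTableau T) :
    rowInsertWord [] (reading T) = (T.headD [], reading T.tail) := by
  induction T with
  | nil => rfl
  | cons R T ih =>
    rw [reading, rowInsertWord_append, ih h.2.2, h.2.1.rowInsertWord_eq h.1,
      reading_tail_append_headD, List.headD_cons, List.tail_cons]

theorem row_reading (h : IsTableau T) (i : ℕ) : row (reading T) i = T.getD i [] := by
  induction i generalizing T with
  | zero => cases T <;> simp [row_zero, h.rowInsertWord_reading]
  | succ i ih =>
    rw [row_succ, h.rowInsertWord_reading]
    cases T with
    | nil => rfl
    | cons R T => exact ih h.2.2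

end IsTableau

theorem isTableau_P (w : List ℕ) : IsTableau (P w) := by
  induction w using List.reverseRecOn with
  | nil => trivial
  | append_singleton w x ih =>
    rw [P_append_singleton]
    exact ih.tInsert x

theorem kEquiv_reading_P (w : List ℕ) : KEquiv w (reading (P w)) := by
  induction w using List.reverseRecOn with
  | nil => rfl
  | append_singleton w x ih =>
    rw [P_append_singleton]
    exact (ih.append_right [x]).trans ((isTableau_P w).kEquiv_reading_tInsert x)

/-! ### Moving a letter between adjacent rows -/

theorem KEquiv.append_append_comm {L Z A : List ℕ} (hLA : L.Forall₂ (· > ·) A)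
    (hLZ : (L ++ Z).Pairwise (· ≤ ·)) : KEquiv (L ++ (Z ++ A)) (L ++ (A ++ Z)) := by
  induction hLA with
  | nil => simpa using refl Z
  | @cons l a L A hal _ ih =>
    have hL : (l :: L).Pairwise (· ≤ ·) := hLZ.sublist (List.sublist_append_left _ _)
    calc KEquiv (l :: (L ++ (Z ++ a :: A))) (l :: a :: (L ++ (Z ++ A))) := by
          simpa using (cons_append_singleton (R := L ++ Z) hal hLZ).append_right A
      KEquiv _ (l :: a :: (L ++ (A ++ Z))) := (ih hLZ.of_cons).append_left [l, a]
      KEquiv _ (l :: (L ++ (a :: A ++ Z))) := by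
          simpa using (cons_append_singleton hal hL).symm.append_right (A ++ Z)

theorem KEquiv.cons_append_comm {u : ℕ} {B C : List ℕ} (hBC : Below B C)
    (hB : B.Pairwise (· ≤ ·)) (hC : (u :: C).Pairwise (· ≤ ·)) (hu : ∀ b ∈ B, u < b) :
    KEquiv (u :: (B ++ C)) (B ++ u :: C) := by
  induction hBC generalizing u with
  | nil C => rfl
  | @cons b c B C hcb _ ih =>
    have huc : u ≤ c := List.rel_of_pairwise_cons hC List.mem_cons_self
    have hcB : ∀ x ∈ B, c < x := fun x hx => hcb.trans_le (List.rel_of_pairwise_cons hB hx)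
    calc KEquiv (u :: (b :: B ++ c :: C)) (u :: b :: c :: (B ++ C)) := by
          simpa using (cons_append_singleton hcb hB).append_context [u] C
      KEquiv _ (b :: u :: c :: (B ++ C)) := swap_left huc hcb (B ++ C)
      KEquiv _ (b :: u :: (B ++ c :: C)) := (ih hB.of_cons hC.of_cons hcB).append_left [b, u]
      KEquiv _ (b :: B ++ u :: c :: C) := by
          have hub : u < b := hu b List.mem_cons_self
          simpa using (cons_append_singleton hub hB).symm.append_right (c :: C)

theorem KEquiv.append_cons_append_comm {u : ℕ} {L B A C : List ℕ} (hlen : L.length = A.length)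
    (hbelow : Below (L ++ B) (A ++ C)) (hLB : (L ++ u :: B).Pairwise (· ≤ ·))
    (hC : (u :: C).Pairwise (· ≤ ·)) (hu : ∀ b ∈ B, u < b) :
    KEquiv (L ++ u :: B ++ (A ++ C)) (L ++ B ++ (A ++ u :: C)) := by
  obtain ⟨hLA, hBC⟩ := hbelow.forall₂_and_of_append hlen
  have hLB' : (L ++ B).Pairwise (· ≤ ·) :=
    hLB.sublist ((List.sublist_cons_self u B).append_left L)
  have hB : B.Pairwise (· ≤ ·) := (List.pairwise_append.1 hLB').2.1
  calc KEquiv (L ++ u :: B ++ (A ++ C)) (L ++ A ++ u :: (B ++ C)) := by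
        simpa using (append_append_comm hLA hLB).append_right C
    KEquiv _ (L ++ A ++ (B ++ u :: C)) := (cons_append_comm hBC hB hC hu).append_left (L ++ A)
    KEquiv _ (L ++ B ++ (A ++ u :: C)) := by
        simpa using (append_append_comm hLA hLB').symm.append_right (u :: C)

theorem Below.kEquiv_orderedInsert_append {S R : List ℕ} {u : ℕ} (h : Below S R)
    (hS : S.Pairwise (· ≤ ·)) (hR : R.Pairwise (· ≤ ·))
    (hcount : R.countP (· < u) = S.countP (· ≤ u)) :
    KEquiv (S.orderedInsert (· ≤ ·) u ++ R) (S ++ R.orderedInsert (· ≤ ·) u) := by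
  have hSsplit := filter_append_filter_not_of_isLowerSet (p := (· ≤ u)) (isLowerSet_Iic u) hS
  have hRsplit := filter_append_filter_not_of_isLowerSet (p := (· < u)) (isLowerSet_Iio u) hR
  simp only [List.countP_eq_length_filter] at hcount
  set L := S.filter (· ≤ u) with hL
  set B := S.filter (fun x => !decide (x ≤ u)) with hB
  set A := R.filter (· < u) with hA
  set C := R.filter (fun x => !decide (x < u)) with hC
  have hLu : ∀ x ∈ L, x ≤ u := by simp [hL]
  have huB : ∀ x ∈ B, u < x := by simp [hB]
  have hAu : ∀ x ∈ A, x ≤ u := by simp +contextual [hA, le_of_lt]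
  have huC : ∀ x ∈ C, u ≤ x := by simp [hC]
  have hLuB := pairwise_append_cons_of_le (hSsplit.symm ▸ hS) hLu fun x hx => (huB x hx).le
  have hAuC := pairwise_append_cons_of_le (hRsplit.symm ▸ hR) hAu huC
  rw [← hSsplit, ← hRsplit, orderedInsert_append hLuB, orderedInsert_append hAuC]
  exact KEquiv.append_cons_append_comm hcount.symm (by rwa [hSsplit, hRsplit]) hLuB
    (List.pairwise_append.1 hAuC).2.1 huB

/-! ### The centralizer of a letter -/

/-- Condition (b) of the theorem for a tableau given by its rows. -/
def IsBalanced (u : ℕ) (T : List (List ℕ)) : Prop :=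
  ∀ i, (T.getD i []).countP (· < u) = (T.getD (i + 1) []).countP (· ≤ u)

theorem isBalanced_cons {u : ℕ} {R : List ℕ} {T : List (List ℕ)} : IsBalanced u (R :: T) ↔
    R.countP (· < u) = (T.headD []).countP (· ≤ u) ∧ IsBalanced u T := by
  rw [IsBalanced, ← Nat.and_forall_add_one]
  cases T <;> rfl

theorem isBalanced_map_filter_le {u : ℕ} {T : List (List ℕ)} :
    IsBalanced u (T.map (List.filter (· ≤ u))) ↔ IsBalanced u T := by
  have hrow (i : ℕ) : (T.map (List.filter (· ≤ u))).getD i [] = (T.getD i []).filter (· ≤ u) := by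
    simpa using List.getD_map (l := T) (d := []) (n := i) (List.filter (· ≤ u))
  have hlt (l : List ℕ) : (l.filter (· ≤ u)).countP (· < u) = l.countP (· < u) := by
    rw [List.countP_filter]
    exact List.countP_congr fun x _ => by simpa using le_of_lt
  have hle (l : List ℕ) : (l.filter (· ≤ u)).countP (· ≤ u) = l.countP (· ≤ u) := by
    simp [List.countP_filter]
  simp only [IsBalanced, hrow, hlt, hle]

theorem IsTableau.kEquiv_cons_reading {u : ℕ} {T : List (List ℕ)} (hT : IsTableau T)
    (hbal : IsBalanced u T) :
    KEquiv (u :: reading T) (reading ((T.headD []).orderedInsert (· ≤ ·) u :: T.tail)) := by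
  induction T with
  | nil => rfl
  | cons R T ih =>
    obtain ⟨hR, hTR, hT⟩ := hT
    rw [isBalanced_cons] at hbal
    have hmove := hTR.kEquiv_orderedInsert_append hT.pairwise_headD hR hbal.1
    calc KEquiv (u :: (reading T ++ R))
          (reading T.tail ++ ((T.headD []).orderedInsert (· ≤ ·) u ++ R)) := by
          simpa [reading] using (ih hT hbal.2).append_right R
      KEquiv _ (reading T.tail ++ (T.headD [] ++ R.orderedInsert (· ≤ ·) u)) :=
          hmove.append_left _
      _ = reading (R.orderedInsert (· ≤ ·) u :: T) := by
          rw [← List.append_assoc, reading_tail_append_headD, reading]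

theorem IsTableau.headD_le_of_kEquiv {u : ℕ} {T : List (List ℕ)} (hT : IsTableau T)
    (h : KEquiv (u :: reading T) (reading T ++ [u])) : ∀ x ∈ T.headD [], x ≤ u := by
  have hrow := h.row_eq 0
  have hsub := sublist_rowInsertWord hT.pairwise_headD (rowInsertWord [] (u :: reading T.tail)).1
  rw [row_zero, row_zero, rowInsertWord_append, hT.rowInsertWord_reading,
    ← reading_tail_append_headD T, ← List.cons_append, rowInsertWord_append] at hrow
  exact le_of_sublist_rowInsert (hrow ▸ hsub)

theorem IsTableau.row_succ_reading_append_singleton {u : ℕ} {T : List (List ℕ)} (hT : IsTableau T)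
    (hu : ∀ x ∈ T.headD [], x ≤ u) (i : ℕ) :
    row (reading T ++ [u]) (i + 1) = T.getD (i + 1) [] := by
  have hbump : (rowInsert u (T.headD [])).2 = none := by
    by_contra hne
    obtain ⟨y, hy⟩ := Option.ne_none_iff_exists'.1 hne
    obtain ⟨hmem, huy⟩ := mem_and_lt_of_rowInsert_eq_some hy
    exact huy.not_ge (hu y hmem)
  rw [← hT.row_reading, row_succ, row_succ, rowInsertWord_append, hT.rowInsertWord_reading]
  simp only [rowInsertWord, hbump, Option.toList_none, List.append_nil]

theorem IsTableau.countP_lt_le_length_of_kEquiv {u : ℕ} {R : List ℕ} {U T : List (List ℕ)}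
    (hT : IsTableau (U ++ R :: T)) (hle : ∀ x ∈ T.headD [], x ≤ u) (hbal : IsBalanced u T)
    (h : KEquiv (u :: reading (U ++ R :: T)) (reading (U ++ R :: T) ++ [u])) :
    R.countP (· < u) ≤ (T.headD []).length := by
  by_contra! hlt
  obtain ⟨hR, hTR, hT'⟩ := hT.of_append
  set V := (T.headD [] ++ [u]) :: T.tail
  have hV : IsTableau (U ++ R :: V) :=
    hT.append_cons_congr ⟨hR, hTR.append_singleton hR hlt, hT'.append_singleton_cons_tail hle⟩
  have hcons : KEquiv (u :: reading (U ++ R :: T)) (reading (U ++ R :: V)) := by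
    have hT'V := hT'.kEquiv_cons_reading hbal
    rw [orderedInsert_eq_append_singleton hT'.pairwise_headD hle] at hT'V
    simpa [reading_append, reading, V] using hT'V.append_right (R ++ reading U)
  have hrow := (hcons.symm.trans h).row_eq (U.length + 1)
  rw [hV.row_reading, hT.row_succ_reading_append_singleton (hT.headD_le_of_kEquiv h)] at hrow
  have hlen : (T.headD [] ++ [u]).length = (T.headD []).length := by
    cases T <;> simpa [V] using congrArg List.length hrow
  simp at hlen

theorem IsTableau.isBalanced_of_kEquiv_of_le {u : ℕ} {U T : List (List ℕ)}
    (hT : IsTableau (U ++ T)) (hle : ∀ R ∈ T, ∀ x ∈ R, x ≤ u)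
    (h : KEquiv (u :: reading (U ++ T)) (reading (U ++ T) ++ [u])) : IsBalanced u T := by
  induction T generalizing U with
  | nil => simp [IsBalanced]
  | cons R T ih =>
    rw [List.forall_mem_cons] at hle
    have hbal : IsBalanced u T :=
      ih (U := U ++ [R]) (by simpa using hT) hle.2 (by simpa using h)
    have hhead : ∀ x ∈ T.headD [], x ≤ u := by
      cases T with
      | nil => simp
      | cons S T => exact hle.2 S List.mem_cons_self
    refine isBalanced_cons.2 ⟨?_, hbal⟩
    rw [List.countP_eq_length (l := T.headD []) |>.2 fun x hx => by simpa using hhead x hx]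
    exact (hT.countP_lt_le_length_of_kEquiv hhead hbal h).antisymm
      (hT.of_append.2.1.length_le_countP_lt hhead)

theorem IsTableau.isBalanced_of_kEquiv {u : ℕ} {T : List (List ℕ)} (hT : IsTableau T)
    (h : KEquiv (u :: reading T) (reading T ++ [u])) : IsBalanced u T := by
  have hfilter := h.filter (p := (· ≤ u)) Set.ordConnected_Iic
  rw [List.filter_append, List.filter_cons_of_pos (by simp), filter_reading,
    List.filter_singleton] at hfilter
  refine isBalanced_map_filter_le.1 (isBalanced_of_kEquiv_of_le (U := []) ?_ ?_ ?_)
  · exact hT.map_filter (isLowerSet_Iic u)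
  · simp +contextual
  · simpa using hfilter

theorem IsTableau.kEquiv_cons_iff {u : ℕ} {T : List (List ℕ)} (hT : IsTableau T) :
    KEquiv (u :: reading T) (reading T ++ [u]) ↔
      (∀ x ∈ T.headD [], x ≤ u) ∧ IsBalanced u T := by
  refine ⟨fun h => ⟨hT.headD_le_of_kEquiv h, hT.isBalanced_of_kEquiv h⟩, fun ⟨hle, hbal⟩ => ?_⟩
  have hcons := hT.kEquiv_cons_reading hbal
  rwa [orderedInsert_eq_append_singleton hT.pairwise_headD hle, reading, ← List.append_assoc,
    reading_tail_append_headD] at hcons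

end Plactic

open Plactic in
theorem stmt_3 (u : ℕ) (hu : 0 < u) (w : List ℕ) (hw : ∀ x ∈ w, 0 < x) :
    w ∈ Cent [u] ↔
      (∀ x ∈ row w 0, x ≤ u) ∧
      (∀ i, (row w i).countP (fun x => decide (x < u)) =
            (row w (i + 1)).countP (fun x => decide (x ≤ u))) := by
  have hreading := kEquiv_reading_P w
  have hcomm : w ∈ Cent [u] ↔ KEquiv (u :: reading (P w)) (reading (P w) ++ [u]) := by
    have hleft := hreading.cons u
    have hright := hreading.append_right [u]
    exact ⟨fun h => hleft.symm.trans (h.trans hright), fun h => hleft.trans (h.trans hright.symm)⟩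
  rw [hcomm, (isTableau_P w).kEquiv_cons_iff, row, ← List.headD_eq_getD]
  rfl
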